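/- arXiv:2501.07749 — 3 statements merged into one kernel-verified Lean document; each statement's English description precedes it below -/
import Mathlib

section
/- A 4×4 complex matrix A commutes with the two-site magnetization M₂ = σ³⊗I + I⊗σ³ if and only if A is a complex linear combination of the six matrices I⊗I, σ³⊗I, I⊗σ³, σ³⊗σ³, σ⁺⊗σ⁻ and σ⁻⊗σ⁺. (This characterizes the general form of spin-conserving nearest-neighbor Hamiltonian densities and jump operators, Eqs. (5)–(6) of the paper.) -/
open Kronecker Matrix

noncomputable section

/-- The Pauli matrix `σ³`. -/
def σ3 : Matrix (Fin 2) (Fin 2) ℂ := !![1, 0; 0, -1]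
/-- The raising operator `σ⁺`. -/
def σp : Matrix (Fin 2) (Fin 2) ℂ := !![0, 1; 0, 0]
/-- The lowering operator `σ⁻`. -/
def σm : Matrix (Fin 2) (Fin 2) ℂ := !![0, 0; 1, 0]
/-- The one-site identity matrix. -/
def I2 : Matrix (Fin 2) (Fin 2) ℂ := 1
/-- The two-site magnetization `M₂ = σ³⊗I + I⊗σ³`. -/
def M₂ : Matrix (Fin 2 × Fin 2) (Fin 2 × Fin 2) ℂ := σ3 ⊗ₖ I2 + I2 ⊗ₖ σ3

/-- The diagonal of the magnetization. -/
def magDiag (p : Fin 2 × Fin 2) : ℂ := σ3 p.1 p.1 + σ3 p.2 p.2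

theorem M₂_eq_diagonal : M₂ = Matrix.diagonal magDiag := by
  ext ⟨a, b⟩ ⟨c, d⟩
  fin_cases a <;> fin_cases b <;> fin_cases c <;> fin_cases d <;>
    simp [M₂, magDiag, σ3, I2]

/-- A 4×4 complex matrix commutes with the two-site magnetization `M₂` iff it is a
complex linear combination of `I⊗I`, `σ³⊗I`, `I⊗σ³`, `σ³⊗σ³`, `σ⁺⊗σ⁻`, `σ⁻⊗σ⁺`. -/
theorem spin_conserving_characterization (A : Matrix (Fin 2 × Fin 2) (Fin 2 × Fin 2) ℂ) :
    A * M₂ = M₂ * A ↔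
      ∃ c₁ c₂ c₃ c₄ c₅ c₆ : ℂ,
        A = c₁ • (I2 ⊗ₖ I2) + c₂ • (σ3 ⊗ₖ I2) + c₃ • (I2 ⊗ₖ σ3)
          + c₄ • (σ3 ⊗ₖ σ3) + c₅ • (σp ⊗ₖ σm) + c₆ • (σm ⊗ₖ σp) := by
  rw [M₂_eq_diagonal]
  constructor
  · intro h
    have key : ∀ i j, magDiag i ≠ magDiag j → A i j = 0 := by
      intro i j hij
      have e := congrFun (congrFun h i) j
      rw [Matrix.mul_diagonal, Matrix.diagonal_mul] at e
      have e2 : (magDiag i - magDiag j) * A i j = 0 := by linear_combination -e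
      exact (mul_eq_zero.mp e2).resolve_left (sub_ne_zero.mpr hij)
    refine ⟨(A (0,0) (0,0) + A (0,1) (0,1) + A (1,0) (1,0) + A (1,1) (1,1)) / 4,
      (A (0,0) (0,0) + A (0,1) (0,1) - A (1,0) (1,0) - A (1,1) (1,1)) / 4,
      (A (0,0) (0,0) - A (0,1) (0,1) + A (1,0) (1,0) - A (1,1) (1,1)) / 4,
      (A (0,0) (0,0) - A (0,1) (0,1) - A (1,0) (1,0) + A (1,1) (1,1)) / 4,
      A (0,1) (1,0), A (1,0) (0,1), ?_⟩
    ext ⟨a, b⟩ ⟨c, d⟩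
    fin_cases a <;> fin_cases b <;> fin_cases c <;> fin_cases d <;>
      simp [σ3, I2, σp, σm] <;>
      first
        | ring1
        | (apply key; norm_num [magDiag, σ3])
  · rintro ⟨c₁, c₂, c₃, c₄, c₅, c₆, rfl⟩
    ext ⟨a, b⟩ ⟨c, d⟩
    rw [Matrix.mul_diagonal, Matrix.diagonal_mul]
    fin_cases a <;> fin_cases b <;> fin_cases c <;> fin_cases d <;>
      simp [σ3, I2, σp, σm, magDiag] <;> ring
end
end

section
/- For the Hamiltonian density h, the coherent spin current j^H := 2i(α σ⁺⊗σ⁻ − conj(α) σ⁻⊗σ⁺) satisfies: i(h(σ³⊗I) − (σ³⊗I)h) = −j^H, i(h(I⊗σ³) − (I⊗σ³)h) = j^H, and h commutes with σ³⊗σ³. In particular h commutes with M₂ = σ³⊗I + I⊗σ³ (strong spin conservation of the coherent part). -/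
open Kronecker Matrix

noncomputable section

/-- The Hamiltonian density `h = α σ⁺⊗σ⁻ + ᾱ σ⁻⊗σ⁺ + β σ³⊗I + γ σ³⊗σ³`. -/
def ham (α : ℂ) (β γ : ℝ) : Matrix (Fin 2 × Fin 2) (Fin 2 × Fin 2) ℂ :=
  α • (σp ⊗ₖ σm) + (starRingEnd ℂ α) • (σm ⊗ₖ σp) + (β : ℂ) • (σ3 ⊗ₖ I2) + (γ : ℂ) • (σ3 ⊗ₖ σ3)

/-- The coherent spin current `j^H = 2i(α σ⁺⊗σ⁻ − ᾱ σ⁻⊗σ⁺)`. -/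
def jH (α : ℂ) : Matrix (Fin 2 × Fin 2) (Fin 2 × Fin 2) ℂ :=
  (2 * Complex.I) • (α • (σp ⊗ₖ σm) - (starRingEnd ℂ α) • (σm ⊗ₖ σp))

/-- Strong spin conservation of the coherent part:
`i[h, σ³⊗I] = −j^H`, `i[h, I⊗σ³] = j^H`, `[h, σ³⊗σ³] = 0` and `[h, M₂] = 0`. -/
theorem coherent_spin_current (α : ℂ) (β γ : ℝ) :
    Complex.I • (ham α β γ * (σ3 ⊗ₖ I2) - (σ3 ⊗ₖ I2) * ham α β γ) = -(jH α)
    ∧ Complex.I • (ham α β γ * (I2 ⊗ₖ σ3) - (I2 ⊗ₖ σ3) * ham α β γ) = jH α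
    ∧ ham α β γ * (σ3 ⊗ₖ σ3) = (σ3 ⊗ₖ σ3) * ham α β γ
    ∧ ham α β γ * (σ3 ⊗ₖ I2 + I2 ⊗ₖ σ3) = (σ3 ⊗ₖ I2 + I2 ⊗ₖ σ3) * ham α β γ := by
  refine ⟨?_, ?_, ?_, ?_⟩ <;> ext ⟨i, j⟩ ⟨k, l⟩ <;> fin_cases i <;> fin_cases j <;>
    fin_cases k <;> fin_cases l <;>
    simp [ham, jH, σ3, σp, σm, I2, Matrix.mul_apply, Fintype.sum_prod_type] <;> ring
end
end

section
/- Let h and L_i (i in a finite index set) be arbitrary 4×4 complex matrices, and define the three-site Lindblad generator on 8×8 complex matrices by ℒ₃*(A) := i((h⊗I)A − A(h⊗I)) + i((I⊗h)A − A(I⊗h)) + ½Σ_i((L_i⊗I)ᴴ(A(L_i⊗I) − (L_i⊗I)A) + ((L_i⊗I)ᴴA − A(L_i⊗I)ᴴ)(L_i⊗I)) + ½Σ_i((I⊗L_i)ᴴ(A(I⊗L_i) − (I⊗L_i)A) + ((I⊗L_i)ᴴA − A(I⊗L_i)ᴴ)(I⊗L_i)). Then for any 2×2 complex matrices q and r,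 the exact Leibniz rule holds for observables at distance two: ℒ₃*(q⊗I⊗r) = ℒ₃*(q⊗I⊗I)·(I⊗I⊗r) + (q⊗I⊗I)·ℒ₃*(I⊗I⊗r). (The vanishing of the Leibniz error term e(x,y) for |x−y| ≥ 2 in Appendix A.) -/
open Kronecker Matrix

noncomputable section

/-- Reindexing of a (two-site)⊗(one-site) Kronecker product as a three-site operator. -/
def assoc3 :
    Matrix ((Fin 2 × Fin 2) × Fin 2) ((Fin 2 × Fin 2) × Fin 2) ℂ
      ≃ Matrix (Fin 2 × (Fin 2 × Fin 2)) (Fin 2 × (Fin 2 × Fin 2)) ℂ :=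
  Matrix.reindex (Equiv.prodAssoc (Fin 2) (Fin 2) (Fin 2))
    (Equiv.prodAssoc (Fin 2) (Fin 2) (Fin 2))

/-- The three-site Lindblad generator built from a two-site Hamiltonian density `h` and
two-site jump operators `L_i`, acting on both nearest-neighbor pairs. -/
def lind3 {N : ℕ} (h : Matrix (Fin 2 × Fin 2) (Fin 2 × Fin 2) ℂ)
    (L : Fin N → Matrix (Fin 2 × Fin 2) (Fin 2 × Fin 2) ℂ)
    (A : Matrix (Fin 2 × (Fin 2 × Fin 2)) (Fin 2 × (Fin 2 × Fin 2)) ℂ) :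
    Matrix (Fin 2 × (Fin 2 × Fin 2)) (Fin 2 × (Fin 2 × Fin 2)) ℂ :=
  Complex.I • (assoc3 (h ⊗ₖ I2) * A - A * assoc3 (h ⊗ₖ I2))
    + Complex.I • ((I2 ⊗ₖ h) * A - A * (I2 ⊗ₖ h))
    + (1 / 2 : ℂ) • ∑ i,
        ((assoc3 (L i ⊗ₖ I2))ᴴ * (A * assoc3 (L i ⊗ₖ I2) - assoc3 (L i ⊗ₖ I2) * A)
          + ((assoc3 (L i ⊗ₖ I2))ᴴ * A - A * (assoc3 (L i ⊗ₖ I2))ᴴ) * assoc3 (L i ⊗ₖ I2))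
    + (1 / 2 : ℂ) • ∑ i,
        ((I2 ⊗ₖ L i)ᴴ * (A * (I2 ⊗ₖ L i) - (I2 ⊗ₖ L i) * A)
          + ((I2 ⊗ₖ L i)ᴴ * A - A * (I2 ⊗ₖ L i)ᴴ) * (I2 ⊗ₖ L i))

/-- The Hamiltonian part with generator `X`. -/
lemma ham_right {n : Type*} [Fintype n] (X Q R : Matrix n n ℂ) (hX : X * R = R * X) :
    X * (Q * R) - (Q * R) * X = (X * Q - Q * X) * R := by
  simp only [sub_mul, mul_assoc, hX]

lemma ham_left {n : Type*} [Fintype n] (X Q R : Matrix n n ℂ) (hX : X * Q = Q * X) :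
    X * (Q * R) - (Q * R) * X = Q * (X * R - R * X) := by
  simp only [mul_sub, ← mul_assoc, hX]

lemma diss_right {n : Type*} [Fintype n] (X Y Q R : Matrix n n ℂ) (hX : X * R = R * X)
    (hY : Y * R = R * Y) :
    Y * ((Q * R) * X - X * (Q * R)) + (Y * (Q * R) - (Q * R) * Y) * X
      = (Y * (Q * X - X * Q) + (Y * Q - Q * Y) * X) * R := by
  have h1 : (Q * R) * X - X * (Q * R) = (Q * X - X * Q) * R := by
    simp only [sub_mul, mul_assoc, hX]
  rw [h1, ham_right Y Q R hY, add_mul, mul_assoc, mul_assoc, mul_assoc, hX]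

lemma diss_left {n : Type*} [Fintype n] (X Y Q R : Matrix n n ℂ) (hX : X * Q = Q * X)
    (hY : Y * Q = Q * Y) :
    Y * ((Q * R) * X - X * (Q * R)) + (Y * (Q * R) - (Q * R) * Y) * X
      = Q * (Y * (R * X - X * R) + (Y * R - R * Y) * X) := by
  have h1 : (Q * R) * X - X * (Q * R) = Q * (R * X - X * R) := by
    simp only [mul_sub, ← mul_assoc, hX]
  rw [h1, ham_left Y Q R hY, mul_add, ← mul_assoc, ← mul_assoc, ← mul_assoc, hY]

lemma comm_right (M : Matrix (Fin 2 × Fin 2) (Fin 2 × Fin 2) ℂ) (r : Matrix (Fin 2) (Fin 2) ℂ) :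
    assoc3 (M ⊗ₖ I2) * (I2 ⊗ₖ (I2 ⊗ₖ r)) = (I2 ⊗ₖ (I2 ⊗ₖ r)) * assoc3 (M ⊗ₖ I2) := by
  have e : I2 ⊗ₖ (I2 ⊗ₖ r) = assoc3 ((1 : Matrix (Fin 2 × Fin 2) (Fin 2 × Fin 2) ℂ) ⊗ₖ r) := by
    rw [← Matrix.one_kronecker_one]
    exact (Matrix.kronecker_assoc I2 I2 r).symm
  rw [e]
  simp only [assoc3, Matrix.reindex_apply, Matrix.submatrix_mul_equiv,
    ← Matrix.mul_kronecker_mul, I2, mul_one, one_mul]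

lemma comm_left (M : Matrix (Fin 2 × Fin 2) (Fin 2 × Fin 2) ℂ) (q : Matrix (Fin 2) (Fin 2) ℂ) :
    (I2 ⊗ₖ M) * (q ⊗ₖ (I2 ⊗ₖ I2)) = (q ⊗ₖ (I2 ⊗ₖ I2)) * (I2 ⊗ₖ M) := by
  simp only [← Matrix.mul_kronecker_mul, I2, Matrix.one_kronecker_one, mul_one, one_mul]

lemma star_right (M : Matrix (Fin 2 × Fin 2) (Fin 2 × Fin 2) ℂ) :
    (assoc3 (M ⊗ₖ I2))ᴴ = assoc3 (Mᴴ ⊗ₖ I2) := by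
  simp only [assoc3, Matrix.conjTranspose_reindex, Matrix.conjTranspose_kronecker, I2,
    Matrix.conjTranspose_one]

lemma star_left (M : Matrix (Fin 2 × Fin 2) (Fin 2 × Fin 2) ℂ) :
    (I2 ⊗ₖ M)ᴴ = I2 ⊗ₖ Mᴴ := by
  simp only [Matrix.conjTranspose_kronecker, I2, Matrix.conjTranspose_one]

/-- The exact Leibniz rule for observables at distance two:
`ℒ₃*(q⊗I⊗r) = ℒ₃*(q⊗I⊗I)·(I⊗I⊗r) + (q⊗I⊗I)·ℒ₃*(I⊗I⊗r)`. -/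
theorem leibniz_distance_two {N : ℕ} (h : Matrix (Fin 2 × Fin 2) (Fin 2 × Fin 2) ℂ)
    (L : Fin N → Matrix (Fin 2 × Fin 2) (Fin 2 × Fin 2) ℂ)
    (q r : Matrix (Fin 2) (Fin 2) ℂ) :
    lind3 h L (q ⊗ₖ (I2 ⊗ₖ r))
      = lind3 h L (q ⊗ₖ (I2 ⊗ₖ I2)) * (I2 ⊗ₖ (I2 ⊗ₖ r))
        + (q ⊗ₖ (I2 ⊗ₖ I2)) * lind3 h L (I2 ⊗ₖ (I2 ⊗ₖ r)) := by
  have hA : q ⊗ₖ (I2 ⊗ₖ r) = (q ⊗ₖ (I2 ⊗ₖ I2)) * (I2 ⊗ₖ (I2 ⊗ₖ r)) := by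
    simp only [← Matrix.mul_kronecker_mul, I2, mul_one, one_mul]
  have hR := fun M => comm_right M r
  have hQ := fun M => comm_left M q
  rw [hA]
  generalize q ⊗ₖ (I2 ⊗ₖ I2) = Q at *
  generalize I2 ⊗ₖ (I2 ⊗ₖ r) = R at *
  unfold lind3
  simp only [star_right, star_left]
  rw [ham_right _ Q R (hR h), ham_left _ Q R (hQ h),
    Finset.sum_congr rfl (fun i _ => diss_right _ _ Q R (hR (L i)) (hR (L i)ᴴ)),
    Finset.sum_congr rfl (fun i _ => diss_left _ _ Q R (hQ (L i)) (hQ (L i)ᴴ))]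
  simp only [hR, hQ, sub_self, mul_zero, zero_mul, add_zero, zero_add, smul_zero,
    Finset.sum_const_zero, Matrix.sum_mul, Matrix.mul_sum, add_mul, mul_add,
    Matrix.smul_mul, Matrix.mul_smul]
  abel
end
end
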